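/- Let I and I' be joinable instances of Simultaneous FPQ-Ordering with join DAG I ⋈ I'. Then sol(I ⋈ I') = sol(I) ∩ sol(I'), under the identification of the sources of I and I' given by the bijection M. -/

import Mathlib

namespace Paper

/-! ### Cyclic orders -/

/-- An abstract cyclic order on (a subset of) `L`, given by a strict
betweenness relation. -/
structure CycOrder (L : Type) where
  btw : L → L → L → Prop

/-- The cyclic order induced by a list: `x, y, z` appear in this cyclic order. -/
def listBtw {L : Type} (l : List L) (x y z : L) : Prop :=
  ∃ (n : ℕ) (l₁ l₂ l₃ l₄ : List L),
    l.rotate n = l₁ ++ x :: (l₂ ++ y :: (l₃ ++ z :: l₄))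

/-- The cyclic order determined by a list. -/
def cycOfList {L : Type} (l : List L) : CycOrder L := ⟨listBtw l⟩

/-- `O₁` extends the image of `O₂` under the injection `φ`
(i.e. `φ(O₂)` is a suborder of `O₁`). -/
def CycOrder.Extends {L₁ L₂ : Type} (O₁ : CycOrder L₁) (φ : L₂ → L₁)
    (O₂ : CycOrder L₂) : Prop :=
  ∀ x y z, O₂.btw x y z → O₁.btw (φ x) (φ y) (φ z)

/-! ### FPQ-trees -/

/-- Kinds of inner nodes of an FPQ-tree: P-nodes, Q-nodes and F-nodes. -/
inductive NodeKind : Type | P | Q | F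
deriving DecidableEq

/-- FPQ-trees (hence also PQ-trees) whose leaves carry labels from `L`. -/
inductive FPQTree (L : Type) : Type
  | leaf : L → FPQTree L
  | node : NodeKind → List (FPQTree L) → FPQTree L

namespace FPQTree

/-- The list of leaf labels of an FPQ-tree. -/
def leaves {L : Type} : FPQTree L → List L
  | .leaf a => [a]
  | .node _ ts => (ts.attach.map (fun c => c.1.leaves)).flatten
decreasing_by
  have := List.sizeOf_lt_of_mem c.2
  simp only [FPQTree.node.sizeOf_spec]
  omega

end FPQTree

mutual
  /-- `Lin T l` : the linear order `l` of the leaves of `T` is one of the leaf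
  orders represented by `T`: children of P-nodes may be permuted arbitrarily,
  children of Q-nodes may be reversed, children of F-nodes are fixed. -/
  inductive FPQTree.Lin {L : Type} : FPQTree L → List L → Prop where
    | leaf (a : L) : FPQTree.Lin (.leaf a) [a]
    | pnode {ts ts' : List (FPQTree L)} {ls : List (List L)} :
        List.Perm ts' ts → FPQTree.LinSeq ts' ls → FPQTree.Lin (.node .P ts) ls.flatten
    | qnode {ts : List (FPQTree L)} {ls : List (List L)} :
        FPQTree.LinSeq ts ls → FPQTree.Lin (.node .Q ts) ls.flatten
    | qnodeRev {ts : List (FPQTree L)} {ls : List (List L)} :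
        FPQTree.LinSeq ts.reverse ls → FPQTree.Lin (.node .Q ts) ls.flatten
    | fnode {ts : List (FPQTree L)} {ls : List (List L)} :
        FPQTree.LinSeq ts ls → FPQTree.Lin (.node .F ts) ls.flatten

  /-- Pointwise lifting of `FPQTree.Lin` to lists of trees. -/
  inductive FPQTree.LinSeq {L : Type} : List (FPQTree L) → List (List L) → Prop where
    | nil : FPQTree.LinSeq [] []
    | cons {t : FPQTree L} {l : List L} {ts : List (FPQTree L)} {ls : List (List L)} :
        FPQTree.Lin t l → FPQTree.LinSeq ts ls → FPQTree.LinSeq (t :: ts) (l :: ls)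
end

namespace FPQTree

/-- The set of cyclic orders represented by an FPQ-tree. -/
def Represents {L : Type} (T : FPQTree L) (O : CycOrder L) : Prop :=
  ∃ l, T.Lin l ∧ O = cycOfList l

/-- The subtree of `T` at the position (sequence of child indices) `p`. -/
def subtree {L : Type} : FPQTree L → List ℕ → Option (FPQTree L)
  | t, [] => some t
  | .leaf _, _ :: _ => none
  | .node _ ts, i :: p =>
      match ts[i]? with
      | some c => c.subtree p
      | none => none

/-- There is a P-node of `T` at position `p`. -/
def PNodeAt {L : Type} (T : FPQTree L) (p : List ℕ) : Prop :=
  ∃ ts, T.subtree p = some (.node .P ts)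

/-- The leaf `x` lies below the `i`-th child of the node of `T` at position `p`. -/
def InBranch {L : Type} (T : FPQTree L) (p : List ℕ) (i : ℕ) (x : L) : Prop :=
  ∃ c, T.subtree (p ++ [i]) = some c ∧ x ∈ c.leaves

/-- Removing the node of `T` at position `p` leaves the leaves `x` and `y` in
the same component. -/
def SameSide {L : Type} (T : FPQTree L) (p : List ℕ) (x y : L) : Prop :=
  (∃ i, T.InBranch p i x ∧ T.InBranch p i y) ∨
    ((∀ i, ¬ T.InBranch p i x) ∧ (∀ i, ¬ T.InBranch p i y))

/-- Removing the node of `T` at position `p` makes the leaves `x`, `y`, `z`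
pairwise disconnected. -/
def Disconnects3 {L : Type} (T : FPQTree L) (p : List ℕ) (x y z : L) : Prop :=
  x ∈ T.leaves ∧ y ∈ T.leaves ∧ z ∈ T.leaves ∧
  ¬ T.SameSide p x y ∧ ¬ T.SameSide p x z ∧ ¬ T.SameSide p y z

end FPQTree

/-- The (inner) node of the child tree `Tchild` at position `q` *fixes* the
(inner) node of the parent tree `Tpar` at position `p`, along the injective
leaf mapping `φ : L(Tchild) → L(Tpar)`. -/
def FixesT {L : Type} (Tpar Tchild : FPQTree L) (φ : L → L) (p q : List ℕ) : Prop :=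
  ∃ x y z, Tchild.Disconnects3 q x y z ∧ Tpar.Disconnects3 p (φ x) (φ y) (φ z)

/-- The P-node of `Tnew` at position `pnew` *stems from* the P-node of `Told`
at position `pold` (where `Tnew` is a tree refining `Told` on the same leaves). -/
def StemsFrom {L : Type} (Tnew Told : FPQTree L) (pnew pold : List ℕ) : Prop :=
  Tnew.PNodeAt pnew ∧ Told.PNodeAt pold ∧
  ∃ x y z, Tnew.Disconnects3 pnew x y z ∧ Told.Disconnects3 pold x y z

end Paper

namespace Paper

/-! ### Instances of Simultaneous FPQ-Ordering -/

/-- An instance of Simultaneous FPQ-Ordering: a DAG whose nodes (indexed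
by `V`) are FPQ-trees with leaf labels in `L`; an arc is a triple
`(i, j, φ)` with tail `i`, head `j` and injective leaf map
`φ : L(tree j) → L(tree i)`. -/
structure SimFPQInstance (V L : Type) where
  tree : V → FPQTree L
  arcs : Set (V × V × (L → L))

namespace SimFPQInstance

variable {V L : Type}

/-- Well-formedness: trees have distinct leaves, arc maps are injective maps
from the leaves of the head to the leaves of the tail, and the arc relation
is acyclic (so the instance is a DAG). -/
def WF (I : SimFPQInstance V L) : Prop :=
  (∀ v, (I.tree v).leaves.Nodup) ∧
  (∀ a ∈ I.arcs, Set.InjOn a.2.2 {x | x ∈ (I.tree a.2.1).leaves} ∧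
      ∀ x ∈ (I.tree a.2.1).leaves, a.2.2 x ∈ (I.tree a.1).leaves) ∧
  (∀ v, ¬ Relation.TransGen (fun a b => ∃ φ, (a, b, φ) ∈ I.arcs) v v)

/-- `v` is a source of the DAG (no incoming arc). -/
def IsSource (I : SimFPQInstance V L) (v : V) : Prop :=
  ∀ u φ, (u, v, φ) ∉ I.arcs

/-- The parents of a node `v`. -/
def Parents (I : SimFPQInstance V L) (v : V) : Set V :=
  {u | ∃ φ, (u, v, φ) ∈ I.arcs}

/-- A solution of the instance: a represented cyclic order for every tree,
such that for every arc the order at the tail extends the image of the order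
at the head. -/
def Solution (I : SimFPQInstance V L) (O : V → CycOrder L) : Prop :=
  (∀ v, (I.tree v).Represents (O v)) ∧
  ∀ i j φ, (i, j, φ) ∈ I.arcs → CycOrder.Extends (O i) φ (O j)

/-- The set of P-nodes (positions) of the parent tree `u` that are fixed by the
node at position `p` of the tree of `v`, along some arc from `u` to `v`. -/
def FixSet (I : SimFPQInstance V L) (u v : V) (p : List ℕ) : Set (List ℕ) :=
  {r | (I.tree u).PNodeAt r ∧ ∃ φ, (u, v, φ) ∈ I.arcs ∧
        FixesT (I.tree u) (I.tree v) φ r p}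

/-- The children of `v` that fix the node at position `p` of the tree of `v`. -/
def fixingChildren (I : SimFPQInstance V L) (v : V) (p : List ℕ) : Set V :=
  {u | ∃ φ, (v, u, φ) ∈ I.arcs ∧ ∃ q, FixesT (I.tree v) (I.tree u) φ p q}

/-- `ω`: the number of children of `v` fixing the node at position `p`. -/
noncomputable def omega (I : SimFPQInstance V L) (v : V) (p : List ℕ) : ℕ :=
  (I.fixingChildren v p).ncard

/-- `fx` assigns to every P-node of the instance its fixedness, i.e. it
satisfies the defining recurrence of fixedness: for a P-node `μ` at position
`p` of the tree of `v`, if `v` is a source then `fixed μ = ω`; otherwise, with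
`F_u` the set of P-nodes of a parent `u` fixed by `μ`, we have `fixed μ = 0`
if some `F_u` is empty, and otherwise
`fixed μ = ω + ∑_{u parent} max_{ν ∈ F_u} (fixed ν - 1)`. -/
def IsFixednessAssignment (I : SimFPQInstance V L) (fx : V → List ℕ → ℤ) : Prop :=
  ∀ v p, (I.tree v).PNodeAt p →
    (I.IsSource v → fx v p = I.omega v p) ∧
    (¬ I.IsSource v →
      ((∃ u ∈ I.Parents v, I.FixSet u v p = ∅) → fx v p = 0) ∧
      ((∀ u ∈ I.Parents v, I.FixSet u v p ≠ ∅) →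
        fx v p = I.omega v p +
          ∑ᶠ u ∈ I.Parents v, sSup ((fun r => fx u r - 1) '' I.FixSet u v p)))

/-- The instance is `k`-fixed: every P-node of every tree has fixedness
at most `k`. -/
def kFixed (I : SimFPQInstance V L) (k : ℤ) : Prop :=
  ∀ fx, I.IsFixednessAssignment fx → ∀ v p, (I.tree v).PNodeAt p → fx v p ≤ k

/-- The instance has P-degree (at most) `k`: every node whose tree contains a
P-node has at most `k` parents. -/
def PDegree (I : SimFPQInstance V L) (k : ℕ) : Prop :=
  ∀ v, (∃ p, (I.tree v).PNodeAt p) → (I.Parents v).ncard ≤ k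

/-- The DAG has height (at most) `1`: there is no directed path of length two. -/
def Height1 (I : SimFPQInstance V L) : Prop :=
  ∀ u v w φ ψ, (u, v, φ) ∈ I.arcs → (v, w, ψ) ∈ I.arcs → False

end SimFPQInstance

/-- `Tres` represents exactly the cyclic orders represented by both `T₁`
and `T₂` (i.e. `Tres = T₁ ∩ T₂`), on the leaves of `T₁`. -/
def SemIntersection {L : Type} (T₁ T₂ Tres : FPQTree L) : Prop :=
  (∀ x, x ∈ Tres.leaves ↔ x ∈ T₁.leaves) ∧
  ∀ O, Tres.Represents O ↔ (T₁.Represents O ∧ T₂.Represents O)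

/-- `Tres = Tpar|_{φ(L(Tchild))} ∩ Tchild`: it represents exactly the orders
represented by `Tchild` whose image under `φ` can be extended to an order
represented by `Tpar`. -/
def IsProjIntersection {L : Type} (Tpar Tchild Tres : FPQTree L) (φ : L → L) : Prop :=
  (∀ x, x ∈ Tres.leaves ↔ x ∈ Tchild.leaves) ∧
  ∀ O, Tres.Represents O ↔
    (Tchild.Represents O ∧ ∃ Op, Tpar.Represents Op ∧ CycOrder.Extends Op φ O)

namespace SimFPQInstance

variable {V L : Type}

/-- `I'` is obtained from `I` by normalizing the single arc `a = (i, j, φ)`,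
i.e. by replacing the tree `T_j` with `T_i|_{φ(L(T_j))} ∩ T_j`. -/
def NormalizeArcStep (I I' : SimFPQInstance V L) (a : V × V × (L → L)) : Prop :=
  a ∈ I.arcs ∧ I'.arcs = I.arcs ∧
  (∀ v, v ≠ a.2.1 → I'.tree v = I.tree v) ∧
  IsProjIntersection (I.tree a.1) (I.tree a.2.1) (I'.tree a.2.1) a.2.2

/-- `I'` is the normalization of `I`: all arcs of `I` are normalized, one
after the other, in some top-down order. -/
def IsNormalization (I I' : SimFPQInstance V L) : Prop :=
  ∃ (as : List (V × V × (L → L))) (F : ℕ → SimFPQInstance V L),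
    as.Nodup ∧ (∀ a, a ∈ as ↔ a ∈ I.arcs) ∧
    (∀ (k l : ℕ) (hk : k < as.length) (hl : l < as.length),
        (as.get ⟨k, hk⟩).2.1 = (as.get ⟨l, hl⟩).1 → k < l) ∧
    F 0 = I ∧ F as.length = I' ∧
    ∀ (k : ℕ) (hk : k < as.length),
      NormalizeArcStep (F k) (F (k + 1)) (as.get ⟨k, hk⟩)

end SimFPQInstance

/-- Two instances are *joinable*: there is a bijection `M` between their
sources such that corresponding source trees have the same leaves. -/
def Joinable {V V' L : Type} (I : SimFPQInstance V L) (I' : SimFPQInstance V' L) : Prop :=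
  ∃ M : {v // I.IsSource v} ≃ {w // I'.IsSource w},
    ∀ s : {v // I.IsSource v}, ∀ x,
      x ∈ (I.tree s.1).leaves ↔ x ∈ (I'.tree (M s).1).leaves

/-- `J` is the join DAG `I ⋈ I'` of two joinable instances with source
bijection `M`: each pair of corresponding sources `T`, `M T` is replaced by the
single tree `T ∩ M T` (identifying the respective nodes of `I` and `I'`);
all other nodes and arcs are kept. -/
def IsJoin {V V' L : Type} (I : SimFPQInstance V L) (I' : SimFPQInstance V' L)
    (M : {v // I.IsSource v} ≃ {w // I'.IsSource w})
    (J : SimFPQInstance (V ⊕ {w : V' // ¬ I'.IsSource w}) L) : Prop :=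
  (∀ v : V, ¬ I.IsSource v → J.tree (Sum.inl v) = I.tree v) ∧
  (∀ s : {v // I.IsSource v},
      SemIntersection (I.tree s.1) (I'.tree (M s).1) (J.tree (Sum.inl s.1))) ∧
  (∀ w : {w : V' // ¬ I'.IsSource w}, J.tree (Sum.inr w) = I'.tree w.1) ∧
  (J.arcs =
    {a | (∃ i j φ, (i, j, φ) ∈ I.arcs ∧ a = (Sum.inl i, Sum.inl j, φ)) ∨
      (∃ (i j : V') (φ : L → L) (hi : ¬ I'.IsSource i) (hj : ¬ I'.IsSource j),
        (i, j, φ) ∈ I'.arcs ∧ a = (Sum.inr ⟨i, hi⟩, Sum.inr ⟨j, hj⟩, φ)) ∨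
      (∃ (s : {w // I'.IsSource w}) (j : V') (φ : L → L) (hj : ¬ I'.IsSource j),
        (s.1, j, φ) ∈ I'.arcs ∧ a = (Sum.inl (M.symm s).1, Sum.inr ⟨j, hj⟩, φ))})

end Paper

namespace Paper

/-- Let `I` and `I'` be joinable instances of Simultaneous
FPQ-Ordering with join DAG `J = I ⋈ I'`.  Then `sol(I ⋈ I') = sol(I) ∩ sol(I')`,
under the identification of the sources of `I` and `I'` given by the
bijection `M`. -/
theorem join_sol_eq_sol_inter_sol
    {V V' L : Type} (I : SimFPQInstance V L) (I' : SimFPQInstance V' L)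
    (hWF : I.WF) (hWF' : I'.WF)
    (M : {v // I.IsSource v} ≃ {w // I'.IsSource w})
    (hM : ∀ s : {v // I.IsSource v}, ∀ x,
      x ∈ (I.tree s.1).leaves ↔ x ∈ (I'.tree (M s).1).leaves)
    (J : SimFPQInstance (V ⊕ {w : V' // ¬ I'.IsSource w}) L)
    (hJ : IsJoin I I' M J) :
    ∀ f : {v // I.IsSource v} → CycOrder L,
      (∃ O, J.Solution O ∧ ∀ s : {v // I.IsSource v}, O (Sum.inl s.1) = f s) ↔
      ((∃ O, I.Solution O ∧ ∀ s : {v // I.IsSource v}, O s.1 = f s) ∧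
        (∃ O', I'.Solution O' ∧ ∀ s : {v // I.IsSource v}, O' (M s).1 = f s)) := by
  obtain ⟨hns, hsrc, hinr, harcs⟩ := hJ
  intro f
  constructor
  · rintro ⟨O, ⟨hrep, hext⟩, hf⟩
    refine ⟨⟨fun v => O (Sum.inl v), ⟨?_, ?_⟩, hf⟩, ?_⟩
    · intro v
      by_cases hv : I.IsSource v
      · exact (((hsrc ⟨v, hv⟩).2 _).1 (hrep (Sum.inl v))).1
      · have := hrep (Sum.inl v)
        rwa [hns v hv] at this
    · intro i j φ h
      apply hext
      rw [harcs]
      exact Or.inl ⟨i, j, φ, h, rfl⟩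
    · classical
      refine ⟨fun w => if h : I'.IsSource w then O (Sum.inl (M.symm ⟨w, h⟩).1)
        else O (Sum.inr ⟨w, h⟩), ⟨?_, ?_⟩, ?_⟩
      · intro w
        by_cases h : I'.IsSource w
        · have := (((hsrc (M.symm ⟨w, h⟩)).2 _).1 (hrep (Sum.inl (M.symm ⟨w, h⟩).1))).2
          simpa [h] using this
        · have := hrep (Sum.inr ⟨w, h⟩)
          rw [hinr] at this
          simpa [h] using this
      · intro i j φ ha
        have hj : ¬ I'.IsSource j := fun h => h i φ ha
        by_cases hi : I'.IsSource i
        · simp only [hi, hj, dif_pos, dif_neg, not_false_eq_true]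
          apply hext
          rw [harcs]
          exact Or.inr (Or.inr ⟨⟨i, hi⟩, j, φ, hj, ha, rfl⟩)
        · simp only [hi, hj, dif_neg, not_false_eq_true]
          apply hext
          rw [harcs]
          exact Or.inr (Or.inl ⟨i, j, φ, hi, hj, ha, rfl⟩)
      · intro s
        have h := (M s).2
        simp [h, hf]
  · rintro ⟨⟨O, ⟨hrep, hext⟩, hf⟩, ⟨O', ⟨hrep', hext'⟩, hf'⟩⟩
    refine ⟨Sum.elim O (fun w => O' w.1), ⟨?_, ?_⟩, fun s => hf s⟩
    · rintro (v | w)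
      · by_cases hv : I.IsSource v
        · refine ((hsrc ⟨v, hv⟩).2 _).2 ⟨hrep v, ?_⟩
          have h1 := hrep' (M ⟨v, hv⟩).1
          rw [hf' ⟨v, hv⟩, ← hf ⟨v, hv⟩] at h1
          exact h1
        · rw [hns v hv]
          exact hrep v
      · rw [hinr]
        exact hrep' w.1
    · intro i j φ h
      rw [harcs] at h
      rcases h with ⟨i', j', φ', ha, he⟩ | ⟨i', j', φ', hi, hj, ha, he⟩ | ⟨s, j', φ', hj, ha, he⟩
      · simp only [Prod.mk.injEq] at he
        obtain ⟨rfl, rfl, rfl⟩ := he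
        exact hext _ _ _ ha
      · simp only [Prod.mk.injEq] at he
        obtain ⟨rfl, rfl, rfl⟩ := he
        exact hext' _ _ _ ha
      · simp only [Prod.mk.injEq] at he
        obtain ⟨rfl, rfl, rfl⟩ := he
        have h1 := hext' _ _ _ ha
        have h2 := hf' (M.symm s)
        rw [Equiv.apply_symm_apply, ← hf] at h2
        rw [h2] at h1
        exact h1

end Paper
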